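/- Let i ≥ 1 and nonnegative integers a_1,…,a_i be given, let L = 1, and set K = (i−1) + Σ_{j=1}^{i} a_j + 1. Then the optimal broadcast rate R*_2 of the (a_i,…,a_1)_1-bar-ICP equals exactly K. -/

import Mathlib

open Finset

/-- `<m>_n`: the unique element of `{1,…,n}` congruent to `m` modulo `n`. -/
def angMod (m : ℤ) (n : ℕ) : ℕ :=
  if m % (n : ℤ) = 0 then n else (m % (n : ℤ)).toNat

/-- Message indices of the bar-ICP: pairs in `[K] × [i]`. -/
abbrev Msg (K i : ℕ) : Type :=
  {p : ℕ × ℕ // p.1 ∈ Finset.Icc 1 K ∧ p.2 ∈ Finset.Icc 1 i}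

/-- Users of the bar-ICP: elements of `[K]`. -/
abbrev User (K : ℕ) : Type := {k : ℕ // k ∈ Finset.Icc 1 K}

/-- The side-information index set `K_k` of user `k` in the
`(a_i,…,a_1)_L`-bar-ICP, as a set of pairs `(b,t)`. -/
def knownIdx (K i L : ℕ) (a : ℕ → ℕ) (k : ℕ) : Set (ℕ × ℕ) :=
  {p | ∃ t ∈ Finset.Icc 1 i, ∃ v ∈ Finset.Icc 1 (i - 1), ∃ r ∈ Finset.Icc 1 L,
    p.2 = t ∧
    p.1 = angMod ((k : ℤ) + (∑ j ∈ Finset.Icc 1 v, (a (angMod ((i : ℤ) + (t : ℤ) - (j : ℤ)) i) : ℤ))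
        + ((v : ℤ) - 1) * (L : ℤ) + (r : ℤ)) K}

/-- Want set of user `u` in the bar-ICP: the messages `(u,t)`, `t ∈ [i]`. -/
def barWant (K i : ℕ) (u : User K) : Set (Msg K i) :=
  {p | p.1.1 = u.1}

/-- Known set of user `u` in the bar-ICP. -/
def barKnown (K i L : ℕ) (a : ℕ → ℕ) (u : User K) : Set (Msg K i) :=
  {p | p.1 ∈ knownIdx K i L a u.1}

/-- A valid index code of length `ℓ` for message length `t` for the index coding
problem with message index set `I`, users `U`, want sets `W` and known sets `Kn`. -/
def ValidCode {I U : Type} (W Kn : U → Set I) (t ℓ : ℕ) : Prop :=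
  ∃ E : (I → Fin t → Bool) → Fin ℓ → Bool,
  ∃ D : ∀ u : U, (Fin ℓ → Bool) → (↥(Kn u) → Fin t → Bool) → (↥(W u) → Fin t → Bool),
    ∀ x : I → Fin t → Bool, ∀ u : U,
      D u (E x) (fun m => x m.1) = fun m => x m.1

/-- The optimal broadcast rate of an index coding problem. -/
noncomputable def optRate {I U : Type} (W Kn : U → Set I) : ℝ :=
  sInf {ρ : ℝ | ∃ t ℓ : ℕ, 1 ≤ t ∧ ValidCode W Kn t ℓ ∧ ρ = (ℓ : ℝ) / (t : ℝ)}


lemma angMod_mem (m : ℤ) (n : ℕ) (hn : 1 ≤ n) : 1 ≤ angMod m n ∧ angMod m n ≤ n := by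
  unfold angMod
  have h1 := Int.emod_nonneg m (b := (n : ℤ)) (by omega)
  have h2 := Int.emod_lt_of_pos m (b := (n : ℤ)) (by omega)
  split_ifs <;> omega

lemma angMod_modEq (m : ℤ) (n : ℕ) (hn : 1 ≤ n) : (angMod m n : ℤ) ≡ m [ZMOD n] := by
  unfold angMod
  have h1 := Int.emod_nonneg m (b := (n : ℤ)) (by omega)
  split_ifs with h
  · simp [Int.ModEq, h]
  · rw [Int.toNat_of_nonneg h1]
    exact Int.mod_modEq m n

lemma angMod_unique (m : ℤ) (n b : ℕ) (h1 : 1 ≤ b) (h2 : b ≤ n) (h : (b : ℤ) ≡ m [ZMOD n]) :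
    angMod m n = b := by
  have hn : 1 ≤ n := h1.trans h2
  have h3 := (angMod_modEq m n hn).trans h.symm
  obtain ⟨h4, h5⟩ := angMod_mem m n hn
  obtain ⟨c, hc⟩ := h3.dvd
  have : c = 0 := by
    by_contra hc0
    rcases lt_or_gt_of_ne hc0 with h | h <;> nlinarith
  subst this
  omega

lemma angMod_congr (m m' : ℤ) (n : ℕ) (hn : 1 ≤ n) (h : m ≡ m' [ZMOD n]) :
    angMod m n = angMod m' n := by
  obtain ⟨h4, h5⟩ := angMod_mem m' n hn
  exact angMod_unique _ _ _ h4 h5 ((angMod_modEq m' n hn).trans h.symm)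

/-- Cyclic prefix sums of the gaps. -/
def qSum (i : ℕ) (a : ℕ → ℕ) (n : ℕ) : ℕ := ∑ j ∈ Finset.range n, (a (angMod (j : ℤ) i) + 1)

lemma qSum_succ (i : ℕ) (a : ℕ → ℕ) (n : ℕ) :
    qSum i a (n + 1) = qSum i a n + (a (angMod (n : ℤ) i) + 1) := Finset.sum_range_succ _ _

lemma qSum_mono (i : ℕ) (a : ℕ → ℕ) : Monotone (qSum i a) :=
  monotone_nat_of_le_succ fun n => by rw [qSum_succ]; omega

lemma qSum_self (i : ℕ) (hi : 1 ≤ i) (a : ℕ → ℕ) :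
    qSum i a i = (i - 1) * 1 + (∑ j ∈ Finset.Icc 1 i, a j) + 1 := by
  obtain ⟨n, rfl⟩ : ∃ n, i = n + 1 := ⟨i - 1, by omega⟩
  unfold qSum
  rw [Finset.sum_range_succ', ← Finset.Ico_add_one_right_eq_Icc, Finset.sum_Ico_eq_sum_range]
  rw [show n + 1 + 1 - 1 = n + 1 by omega, Finset.sum_range_succ]
  rw [Finset.sum_congr rfl (g := fun j => a (1 + j) + 1)]
  · rw [angMod_unique ((0 : ℕ) : ℤ) (n + 1) (n + 1) (by omega) le_rfl (by simp [Int.ModEq])]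
    rw [Finset.sum_add_distrib, add_comm 1 n]
    simp
    ring
  · intro j hj
    have := Finset.mem_range.1 hj
    rw [angMod_unique _ (n + 1) (1 + j) (by omega) (by omega) (by
      rw [show ((1 + j : ℕ) : ℤ) = ((j + 1 : ℕ) : ℤ) by push_cast; ring])]

lemma qSum_period (i : ℕ) (hi : 1 ≤ i) (a : ℕ → ℕ) (n : ℕ) :
    qSum i a (i + n) = qSum i a n + qSum i a i := by
  induction n with
  | zero => simp [qSum]
  | succ n ih =>
    rw [← add_assoc, qSum_succ, ih, qSum_succ]
    rw [angMod_congr ((i + n : ℕ) : ℤ) (n : ℤ) i hi (by simp [Int.ModEq])]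
    ring

lemma sum_shift (i : ℕ) (a : ℕ → ℕ) (t v : ℕ) (hv : v ≤ i) :
    (∑ j ∈ Finset.Icc 1 v, (a (angMod ((i : ℤ) + (t : ℤ) - (j : ℤ)) i) : ℤ)) + v
      = (qSum i a (i + t) : ℤ) - qSum i a (i + t - v) := by
  induction v with
  | zero => simp
  | succ v ih =>
    rw [Finset.sum_Icc_succ_top (by omega)]
    have h := ih (by omega)
    have h2 := qSum_succ i a (i + t - (v + 1))
    rw [show i + t - (v + 1) + 1 = i + t - v by omega,
      show ((i + t - (v + 1) : ℕ) : ℤ) = (i : ℤ) + t - ((v + 1 : ℕ) : ℤ) by omega] at h2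
    rw [h2] at h
    push_cast at h ⊢
    linarith

lemma validCode_of {I U : Type} (W Kn : U → Set I) (t ℓ : ℕ)
    (E : (I → Fin t → Bool) → Fin ℓ → Bool)
    (h : ∀ x y u, E x = E y → (∀ m ∈ Kn u, x m = y m) → ∀ m ∈ W u, x m = y m) :
    ValidCode W Kn t ℓ := by
  classical
  refine ⟨E, fun u e s => if hx : ∃ x, E x = e ∧ (fun m : Kn u => x m.1) = s then
    fun m => hx.choose m.1 else fun _ _ => false, ?_⟩
  intro x u
  have hx : ∃ z, E z = E x ∧ (fun m : Kn u => z m.1) = fun m : Kn u => x m.1 := ⟨x, rfl, rfl⟩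
  simp only [dif_pos hx]
  funext m
  refine h _ _ u hx.choose_spec.1 (fun m hm => congrFun hx.choose_spec.2 ⟨m, hm⟩) m.1 m.2

lemma known_of_ne (i : ℕ) (a : ℕ → ℕ) (K : ℕ)
    (hi : 1 ≤ i) (hK : K = qSum i a i) (hK1 : 1 ≤ K) (k s t : ℕ) (hs : 1 ≤ s) (hs' : s ≤ i)
    (ht : 1 ≤ t) (ht' : t ≤ i) (hst : s ≠ t) (z : ℤ)
    (hz : z ≡ (k : ℤ) + qSum i a s - qSum i a t [ZMOD K]) :
    (angMod z K, s) ∈ knownIdx K i 1 a k := by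
  have hp := qSum_period i hi a s
  have hp' := qSum_period i hi a t
  rw [← hK] at hp hp'
  rcases lt_or_gt_of_ne hst with h | h
  · refine ⟨s, by simp; omega, i + s - t, by simp; omega, 1, by simp, rfl, ?_⟩
    have h1 := sum_shift i a s (i + s - t) (by omega)
    rw [show i + s - (i + s - t) = t by omega] at h1
    apply angMod_congr _ _ _ hK1
    refine hz.trans (Int.modEq_iff_dvd.2 ⟨1, ?_⟩)
    push_cast at h1 ⊢
    rw [hp] at h1
    push_cast at h1
    linarith
  · refine ⟨s, by simp; omega, s - t, by simp; omega, 1, by simp, rfl, ?_⟩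
    have h1 := sum_shift i a s (s - t) (by omega)
    rw [show i + s - (s - t) = i + t by omega] at h1
    apply angMod_congr _ _ _ hK1
    refine hz.trans (Int.modEq_iff_dvd.2 ⟨0, ?_⟩)
    rw [hp, hp'] at h1
    push_cast at h1 ⊢
    linarith

lemma known_far (i : ℕ) (a : ℕ → ℕ) (K : ℕ)
    (hi : 1 ≤ i) (hK : K = qSum i a i) (k b t : ℕ) (hk : 1 ≤ k) (hk' : k ≤ K)
    (h : (b, t) ∈ knownIdx K i 1 a k) : (k < b ∧ b ≤ K) ∨ a t < K - b := by
  obtain ⟨t', ht, v, hv, r, hr, h1, h2⟩ := h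
  simp only at h1 h2
  subst h1
  simp only [Finset.mem_Icc] at ht hv hr
  obtain rfl : r = 1 := by omega
  have h3 := sum_shift i a t v (by omega)
  have hp := qSum_period i hi a t
  rw [← hK] at hp
  have h4 := qSum_mono i a (show t + 1 ≤ i + t - v by omega)
  rw [qSum_succ, angMod_unique (t : ℤ) i t ht.1 ht.2 (Int.ModEq.refl _)] at h4
  set S := ∑ j ∈ Finset.Icc 1 v, (a (angMod ((i : ℤ) + (t : ℤ) - (j : ℤ)) i) : ℤ) with hS
  have hS0 : 0 ≤ S := Finset.sum_nonneg fun _ _ => by positivity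
  obtain ⟨s, hs⟩ := Int.eq_ofNat_of_zero_le hS0
  rw [hs] at h2 h3
  have hsK : s + v + a t + 1 ≤ K := by omega
  by_cases hc : k + s + v ≤ K
  · rw [angMod_unique _ K (k + s + v) (by omega) hc (by
      push_cast; ring_nf; rfl)] at h2
    omega
  · rw [angMod_unique _ K (k + s + v - K) (by omega) (by omega) (by
      refine Int.modEq_iff_dvd.2 ⟨1, ?_⟩
      rw [Nat.cast_sub (by omega)]
      push_cast; ring)] at h2
    omega

lemma achiev (i : ℕ) (a : ℕ → ℕ) (K : ℕ) (hi : 1 ≤ i) (hK : K = qSum i a i) (hK1 : 1 ≤ K) :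
    ValidCode (barWant K i) (barKnown K i 1 a) 1 K := by
  classical
  let msg : ℤ → Fin i → Msg K i := fun c j =>
    ⟨(angMod (c + qSum i a (j + 1)) K, j + 1), by
      have := angMod_mem (c + qSum i a (j + 1)) K hK1
      have := j.2
      simp; omega⟩
  let f : Bool → ZMod 2 := fun b => if b then 1 else 0
  have hf : Function.Injective f := by decide
  refine validCode_of _ _ 1 K
    (fun x c => decide ((∑ j : Fin i, f (x (msg (c : ℕ) j) 0)) = 1)) ?_
  rintro x y ⟨k, hk⟩ hE hkn ⟨⟨b, t⟩, hb, ht⟩ hW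
  simp only [barWant, Set.mem_ofPred_eq] at hW
  subst hW
  simp only [Finset.mem_Icc] at hb ht
  have hKz : (K : ℤ) ≠ 0 := by omega
  have c0 := Int.emod_nonneg ((b : ℤ) - qSum i a t) hKz
  have c1 := Int.emod_lt_of_pos ((b : ℤ) - qSum i a t) (b := (K : ℤ)) (by omega)
  set c : ℕ := (((b : ℤ) - qSum i a t) % K).toNat with hc
  have hcK : c < K := by omega
  have hcm : (c : ℤ) ≡ (b : ℤ) - qSum i a t [ZMOD K] := by
    rw [hc, Int.toNat_of_nonneg c0]; exact Int.mod_modEq _ _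
  have h1 := congrFun hE ⟨c, hcK⟩
  have h2 : ∀ u v : ZMod 2, decide (u = 1) = decide (v = 1) → u = v := by decide
  have h3 := h2 _ _ h1
  simp only at h3
  let j0 : Fin i := ⟨t - 1, by omega⟩
  have hj0 : (j0 : ℕ) + 1 = t := by simp only [j0]; omega
  rw [← Finset.add_sum_erase _ _ (Finset.mem_univ j0),
    ← Finset.add_sum_erase (a := j0) _ (fun j => f (y (msg c j) 0)) (Finset.mem_univ j0)] at h3
  rw [Finset.sum_congr rfl (g := fun j => f (y (msg c j) 0))] at h3
  · have h4 := hf (add_right_cancel h3)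
    have h5 : msg c j0 = ⟨(b, t), by simp; omega⟩ := by
      apply Subtype.ext
      simp only [msg, hj0]
      rw [angMod_unique _ K b hb.1 hb.2]
      have := (hcm.add_right (qSum i a t : ℤ)).symm
      simpa using this
    rw [h5] at h4
    funext z
    rw [Subsingleton.elim z 0]
    exact h4
  · intro j hj
    have hne := Finset.ne_of_mem_erase hj
    rw [hkn]
    refine known_of_ne i a K hi hK hK1 b (j + 1) t (by omega) (by omega) ht.1 ht.2 ?_ _ ?_
    · intro h
      apply hne
      apply Fin.ext
      simp only [j0]; omega
    · have := hcm.add_right (qSum i a (j + 1) : ℤ)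
      rwa [show (b : ℤ) - qSum i a t + qSum i a (j + 1) = b + qSum i a (j + 1) - qSum i a t by ring]
        at this

lemma converse (i : ℕ) (a : ℕ → ℕ) (K : ℕ) (hi : 1 ≤ i) (hK : K = qSum i a i)
    (hK2 : K = (i - 1) * 1 + (∑ j ∈ Finset.Icc 1 i, a j) + 1) (t ℓ : ℕ)
    (hV : ValidCode (barWant K i) (barKnown K i 1 a) t ℓ) : K * t ≤ ℓ := by
  classical
  obtain ⟨E, D, hD⟩ := hV
  let J := (j : Fin i) × Fin (a (j + 1) + 1)
  have hcard : Fintype.card J = K := by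
    simp only [J, Fintype.card_sigma, Fintype.card_fin]
    rw [Finset.sum_add_distrib, Fin.sum_univ_eq_sum_range (fun j => a (j + 1))]
    rw [← Finset.Ico_add_one_right_eq_Icc, Finset.sum_Ico_eq_sum_range] at hK2
    simp only [add_comm 1, Nat.add_sub_cancel] at hK2
    simp
    omega
  have haK : ∀ j, 1 ≤ j → j ≤ i → a j < K := by
    intro j h1 h2
    have := Finset.single_le_sum (f := a) (fun _ _ => Nat.zero_le _) (Finset.mem_Icc.2 ⟨h1, h2⟩)
    omega
  let X : (J → Fin t → Bool) → Msg K i → Fin t → Bool := fun y m =>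
    if h : K - m.1.1 < a (m.1.2 - 1 + 1) + 1 then
      y ⟨⟨m.1.2 - 1, by have := Finset.mem_Icc.1 m.2.2; omega⟩, ⟨K - m.1.1, h⟩⟩
    else fun _ => false
  have hinj : Function.Injective (fun y => E (X y)) := by
    intro y y' hE
    simp only at hE
    have key : ∀ d : ℕ, ∀ m : Msg K i, K - m.1.1 = d → X y m = X y' m := by
      intro d
      induction d using Nat.strong_induction_on with
      | _ d ih =>
        rintro ⟨⟨k, s⟩, hk, hs⟩ hd
        simp only at hd hk hs
        have hD1 := hD (X y) ⟨k, hk⟩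
        have hD2 := hD (X y') ⟨k, hk⟩
        have hkn : (fun m : barKnown K i 1 a ⟨k, hk⟩ => X y m.1)
            = fun m : barKnown K i 1 a ⟨k, hk⟩ => X y' m.1 := by
          funext ⟨⟨⟨b, s'⟩, hb, hs'⟩, hm⟩
          simp only [Finset.mem_Icc] at hk hb hs'
          rcases known_far i a K hi hK k b s' hk.1 hk.2 hm with h | h
          · exact ih (K - b) (by omega) _ rfl
          · have : ¬ (K - b < a (s' - 1 + 1) + 1) := by
              rw [Nat.sub_add_cancel hs'.1]; omega
            simp only [X, dif_neg this]
        rw [hE, hkn] at hD1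
        exact congrFun (hD1.symm.trans hD2) ⟨⟨(k, s), hk, hs⟩, rfl⟩
    funext ⟨j, d⟩
    have hj := j.2
    have hd := d.2
    have h1 := haK (j + 1) (by omega) (by omega)
    have h2 := key _ ⟨(K - d, j + 1), by simp; omega⟩ rfl
    have h3 : K - (K - (d : ℕ)) = d := by omega
    have h4 : K ≤ a (j + 1) + (K - d) := by omega
    simpa [X, h3, h4] using h2
  have h := Fintype.card_le_of_injective _ hinj
  simp only [Fintype.card_fun, Fintype.card_fin, Fintype.card_bool, hcard] at h
  rw [← pow_mul] at h
  have := (Nat.pow_le_pow_iff_right (by norm_num)).1 h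
  rwa [mul_comm] at this

/-- second part of Corollary 4 of the paper: the optimal broadcast
rate of the `(a_i,…,a_1)_1`-bar-ICP (i.e. `L = 1`) equals exactly `K`. -/
theorem stmt4 (i : ℕ) (hi : 1 ≤ i) (a : ℕ → ℕ)
    (K : ℕ) (hK : K = (i - 1) * 1 + (∑ j ∈ Finset.Icc 1 i, a j) + 1) :
    optRate (barWant K i) (barKnown K i 1 a) = (K : ℝ) := by
  have hq : K = qSum i a i := by rw [qSum_self i hi, hK]
  have hK1 : 1 ≤ K := by omega
  unfold optRate
  refine IsLeast.csInf_eq ⟨⟨1, K, le_rfl, achiev i a K hi hq hK1, by simp⟩, ?_⟩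
  rintro ρ ⟨t, ℓ, ht, hV, rfl⟩
  have h := converse i a K hi hq hK t ℓ hV
  have ht' : (0 : ℝ) < t := by exact_mod_cast ht
  rw [le_div_iff₀ ht']
  exact_mod_cast h
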